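/- For each integer n ≥ 0 and q on the unit disk q = e^{2πiτ}, define G₂(τ) = -1/24 + ∑_{n≥1} σ₁(n)qⁿ and G₂*(τ) = G₂(τ) + 1/(8π Im τ). Then the function m(τ) = -8π Im(τ) G₂*(τ) satisfies m(τ) = -8π Im(τ) G₂(τ) - 1, and the claimed single-valued period matrix identity: if ω₁, ω₂, η₁, η₂ ∈ ℂ satisfy ω₂ = τω₁, ω₁η₂ - η₁ω₂ = 2πi, and G₂(τ) = -(1/2)ω₁η₁/(2πi)², then with P = [[ω₁,η₁],[ω₂,η₂]] the matrix conj(P)⁻¹P equals diag(conj(λ)⁻¹, conj(λ)) · [[m(conj(τ)), (4π Im τ)⁻¹(m(τ)m(conj(τ)) - 1)],[-4π Im τ, -m(τ)]] · diag(λ, λ⁻¹), where ω₁ = 2πi λ and m(conj(τ)) denotes the complex conjugate relation -8π Im(τ)conj(G₂*(τ)) appropriately interpreted. -/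

import Mathlib

open Matrix Complex

/-- `m(τ) = -8π Im(τ) G₂*(τ)` where `G₂*(τ) = G₂(τ) + 1/(8π Im τ)`. -/
noncomputable def mval (τ G₂ : ℂ) : ℂ :=
  (-(8 * (Real.pi : ℂ) * (τ.im : ℂ))) * (G₂ + 1 / (8 * (Real.pi : ℂ) * (τ.im : ℂ)))

/-!
The Legendre relation factors the period matrix as `P = M * diag(λ, λ⁻¹)` with `M` depending only on
`τ` and `c = λη₁`, and `conj(P)⁻¹ P` turns the right factor `diag(λ, λ⁻¹)` into the two outer
diagonal matrices of the formula. Since `2πi` is purely imaginary, `conj(M)⁻¹ M` can be expressed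
through `m = (conj τ - τ) c - 1` and `2πi (conj τ - τ) = 4π Im τ`; Fricke's relation identifies this
`m` with `m(τ)`.
-/

section SingleValued

variable {n R : Type*} [Fintype n] [DecidableEq n] [CommRing R] [StarRing R]

/-- The single-valued matrix `conj(P)⁻¹ P` attached to a period matrix `P`, over any commutative
ring with an involution in the role of complex conjugation. -/
noncomputable def singleValuedMatrix (P : Matrix n n R) : Matrix n n R :=
  (P.map (starRingEnd R))⁻¹ * P

theorem singleValuedMatrix_mul (A B : Matrix n n R) :
    singleValuedMatrix (A * B) = (B.map (starRingEnd R))⁻¹ * singleValuedMatrix A * B := by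
  simp only [singleValuedMatrix, Matrix.map_mul, Matrix.mul_inv_rev, Matrix.mul_assoc]

theorem singleValuedMatrix_eq_of_eq_map_mul {P S : Matrix n n R} (hP : IsUnit P.det)
    (h : P = P.map (starRingEnd R) * S) : singleValuedMatrix P = S := by
  have hconj : IsUnit (P.map (starRingEnd R)).det := by
    simpa only [RingHom.map_det, RingHom.mapMatrix_apply] using hP.map (starRingEnd R)
  calc singleValuedMatrix P = (P.map (starRingEnd R))⁻¹ * (P.map (starRingEnd R) * S) :=
        congrArg ((P.map (starRingEnd R))⁻¹ * ·) h
    _ = S := nonsing_inv_mul_cancel_left _ S hconj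

end SingleValued

section PeriodFrame

variable {R S K L : Type*} [CommRing R] [CommRing S] [Field K] [Field L]

/-- The period matrix normalized to `λ = 1`: its columns are `w (1, τ)` and `(0, 1) + c (1, τ)`, so
its determinant is `w`, which is `2πi` for an elliptic curve. -/
def periodFrame (w τ c : R) : Matrix (Fin 2) (Fin 2) R :=
  !![w, c; τ * w, 1 + τ * c]

theorem det_periodFrame (w τ c : R) : (periodFrame w τ c).det = w := by
  rw [periodFrame, det_fin_two_of]
  ring

theorem periodFrame_map (f : R →+* S) (w τ c : R) :
    (periodFrame w τ c).map f = periodFrame (f w) (f τ) (f c) := by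
  ext i j
  fin_cases i <;> fin_cases j <;> simp [periodFrame]

theorem inv_map_diag_inv (f : K →+* L) {a : K} (ha : a ≠ 0) :
    (!![a, 0; 0, a⁻¹].map f)⁻¹ = !![(f a)⁻¹, 0; 0, f a] := by
  apply inv_eq_right_inv
  ext i j
  fin_cases i <;> fin_cases j <;> simp [mul_apply, ha]

theorem periodMatrix_eq_periodFrame_mul {w τ lam η₁ η₂ : K} (hw : w ≠ 0) (hlam : lam ≠ 0)
    (hLeg : w * lam * η₂ - η₁ * (τ * (w * lam)) = w) :
    !![w * lam, η₁; τ * (w * lam), η₂] =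
      periodFrame w τ (lam * η₁) * !![lam, 0; 0, lam⁻¹] := by
  have hη₁ : lam * η₁ * lam⁻¹ = η₁ := by field_simp
  have hη₂ : (1 + τ * (lam * η₁)) * lam⁻¹ = η₂ := by
    field_simp
    apply mul_left_cancel₀ hw
    linear_combination -hLeg
  simp [periodFrame, hη₁, hη₂, mul_assoc]

theorem singleValuedMatrix_periodFrame [StarRing K] {w τ c m : K} (hw : w ≠ 0)
    (hw_conj : starRingEnd K w = -w) (hτ : starRingEnd K τ - τ ≠ 0)
    (hm : m = (starRingEnd K τ - τ) * c - 1) :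
    singleValuedMatrix (periodFrame w τ c) =
      !![starRingEnd K m, (w * (starRingEnd K τ - τ))⁻¹ * (m * starRingEnd K m - 1);
        -(w * (starRingEnd K τ - τ)), -m] := by
  apply singleValuedMatrix_eq_of_eq_map_mul
  · simpa only [det_periodFrame] using hw.isUnit
  have hm_conj : starRingEnd K m = (τ - starRingEnd K τ) * starRingEnd K c - 1 := by
    simp [hm]
  rw [periodFrame_map, hw_conj, hm_conj, hm, periodFrame, periodFrame, mul_fin_two]
  ext i j
  fin_cases i <;> fin_cases j <;> dsimp <;> field_simp <;> ring

end PeriodFrame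

theorem conj_two_pi_I : starRingEnd ℂ (2 * (Real.pi : ℂ) * I) = -(2 * (Real.pi : ℂ) * I) := by
  simp [conj_ofNat]

theorem two_pi_I_mul_conj_sub (τ : ℂ) :
    2 * (Real.pi : ℂ) * I * (starRingEnd ℂ τ - τ) = 4 * (Real.pi : ℂ) * (τ.im : ℂ) := by
  have hτ : τ - starRingEnd ℂ τ = 2 * (τ.im : ℂ) * I := by simpa using sub_conj τ
  linear_combination -(2 * (Real.pi : ℂ) * I) * hτ - 4 * (Real.pi : ℂ) * (τ.im : ℂ) * I_sq

theorem mval_eq {τ : ℂ} (hτ : τ.im ≠ 0) (G₂ : ℂ) :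
    mval τ G₂ = -(8 * (Real.pi : ℂ) * (τ.im : ℂ)) * G₂ - 1 := by
  have him : (τ.im : ℂ) ≠ 0 := ofReal_ne_zero.mpr hτ
  rw [mval]
  field_simp
  ring

theorem mval_eq_of_fricke {τ lam η₁ G₂ : ℂ} (hτ : τ.im ≠ 0)
    (hFricke : G₂ = -(1 / 2) * ((2 * (Real.pi : ℂ) * I * lam) * η₁)
      / (2 * (Real.pi : ℂ) * I) ^ 2) :
    mval τ G₂ = (starRingEnd ℂ τ - τ) * (lam * η₁) - 1 := by
  have hc : 2 * (2 * (Real.pi : ℂ) * I) * G₂ = -(lam * η₁) := by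
    rw [hFricke]
    field_simp
  rw [mval_eq hτ]
  linear_combination 2 * G₂ * two_pi_I_mul_conj_sub τ - (starRingEnd ℂ τ - τ) * hc

/-- Single-valued period matrix of the universal elliptic curve: with `ω₁ = 2πiλ`,
`ω₂ = τω₁`, the Legendre relation `ω₁η₂ - η₁ω₂ = 2πi` and Fricke's relation
`G₂ = -(1/2)ω₁η₁/(2πi)²`, one has `m(τ) = -8π Im(τ) G₂(τ) - 1` and
`conj(P)⁻¹ P = diag(conj(λ)⁻¹, conj λ) · [[conj m, (4π Im τ)⁻¹(m·conj m - 1)],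
[-4π Im τ, -m]] · diag(λ, λ⁻¹)` where `P = [[ω₁,η₁],[ω₂,η₂]]` and `m(τ̄) := conj(m(τ))`. -/
theorem stmt_15 (τ lam η₁ η₂ G₂ : ℂ) (hτ : 0 < τ.im) (hlam : lam ≠ 0)
    (hLeg : (2 * (Real.pi : ℂ) * Complex.I * lam) * η₂
        - η₁ * (τ * (2 * (Real.pi : ℂ) * Complex.I * lam)) = 2 * (Real.pi : ℂ) * Complex.I)
    (hFricke : G₂ = -(1 / 2) * ((2 * (Real.pi : ℂ) * Complex.I * lam) * η₁)
        / (2 * (Real.pi : ℂ) * Complex.I) ^ 2) :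
    mval τ G₂ = -(8 * (Real.pi : ℂ) * (τ.im : ℂ)) * G₂ - 1 ∧
    ((!![2 * (Real.pi : ℂ) * Complex.I * lam, η₁;
        τ * (2 * (Real.pi : ℂ) * Complex.I * lam), η₂]).map (starRingEnd ℂ))⁻¹
        * !![2 * (Real.pi : ℂ) * Complex.I * lam, η₁;
            τ * (2 * (Real.pi : ℂ) * Complex.I * lam), η₂]
      = !![(starRingEnd ℂ lam)⁻¹, 0; 0, starRingEnd ℂ lam]
        * !![starRingEnd ℂ (mval τ G₂),
              (4 * (Real.pi : ℂ) * (τ.im : ℂ))⁻¹ *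
                (mval τ G₂ * starRingEnd ℂ (mval τ G₂) - 1);
            -(4 * (Real.pi : ℂ) * (τ.im : ℂ)), -(mval τ G₂)]
        * !![lam, 0; 0, lam⁻¹] := by
  have hw : 2 * (Real.pi : ℂ) * I ≠ 0 := two_pi_I_ne_zero
  have hdiag : (!![lam, 0; 0, lam⁻¹].map (starRingEnd ℂ))⁻¹ =
      !![(starRingEnd ℂ lam)⁻¹, 0; 0, starRingEnd ℂ lam] :=
    inv_map_diag_inv (starRingEnd ℂ) hlam
  have hconj : starRingEnd ℂ τ - τ ≠ 0 := by
    rw [sub_ne_zero, Ne, conj_eq_iff_im]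
    exact hτ.ne'
  have hframe := singleValuedMatrix_periodFrame hw conj_two_pi_I hconj
    (mval_eq_of_fricke hτ.ne' hFricke)
  rw [two_pi_I_mul_conj_sub] at hframe
  refine ⟨mval_eq hτ.ne' G₂, ?_⟩
  rw [← singleValuedMatrix, periodMatrix_eq_periodFrame_mul hw hlam hLeg,
    singleValuedMatrix_mul, hdiag, hframe]
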